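/- For any graph G on n vertices with at least one edge and odd integers k ≥ t ≥ 1, w_k(G)^{1/k} ≥ w_t(G)^{1/t}: the sequence of odd-index normalized walk counts w_j(G)^{1/j} is non-decreasing along odd j. -/

import Mathlib

/-- The number of walks of length `k` in a graph `G` on vertex set `Fin n`. -/
noncomputable def walkCount (n k : ℕ) (G : SimpleGraph (Fin n)) : ℕ :=
  Nat.card {f : Fin (k + 1) → Fin n //
    ∀ i : Fin k, G.Adj (f i.castSucc) (f i.succ)}

/-- `w_j(G)`: the number of walks of length `j` in `G` divided by `n`. -/
noncomputable def w (n j : ℕ) (G : SimpleGraph (Fin n)) : ℝ :=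
  (walkCount n j G : ℝ) / n

open Finset

/-- The log-sum inequality. -/
theorem sum_mul_log_sub_log_le {ι : Type*} (s : Finset ι) (p q : ι → ℝ)
    (hp : ∀ i ∈ s, 0 ≤ p i) (hq : ∀ i ∈ s, 0 ≤ q i) (hpq : ∀ i ∈ s, 0 < p i → 0 < q i)
    (hP : 0 < ∑ i ∈ s, p i) (hQ : 0 < ∑ i ∈ s, q i) :
    ∑ i ∈ s, p i * (Real.log (q i) - Real.log (p i)) ≤
      (∑ i ∈ s, p i) * (Real.log (∑ i ∈ s, q i) - Real.log (∑ i ∈ s, p i)) := by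
  set P := ∑ i ∈ s, p i with hPdef
  set Q := ∑ i ∈ s, q i with hQdef
  have key : ∀ i ∈ s, p i * (Real.log (q i) - Real.log (p i)) ≤
      q i * (P / Q) - p i + p i * (Real.log Q - Real.log P) := by
    intro i hi
    rcases (hp i hi).eq_or_lt with h0 | hpos
    · rw [← h0]
      have : 0 ≤ q i * (P / Q) := mul_nonneg (hq i hi) (by positivity)
      simpa using this
    · have hqi := hpq i hi hpos
      have hlog := Real.log_le_sub_one_of_pos (x := q i * P / (p i * Q)) (by positivity)
      rw [Real.log_div (by positivity) (by positivity),
        Real.log_mul hqi.ne' hP.ne', Real.log_mul hpos.ne' hQ.ne'] at hlog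
      have hmul := mul_le_mul_of_nonneg_left hlog hpos.le
      have heq : p i * (q i * P / (p i * Q) - 1) = q i * (P / Q) - p i := by
        field_simp
      rw [heq] at hmul
      linarith
  calc _ ≤ ∑ i ∈ s, (q i * (P / Q) - p i + p i * (Real.log Q - Real.log P)) := sum_le_sum key
    _ = Q * (P / Q) - P + P * (Real.log Q - Real.log P) := by
      rw [sum_add_distrib, sum_sub_distrib, ← sum_mul, ← sum_mul]
    _ = _ := by field_simp; ring

section WeightedWalks

variable {V : Type*} [Fintype V]

/-- The total weight of the walks of length `j` starting at a given vertex, for edge weights `A`. -/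
def walkWeight (A : V → V → ℝ) : ℕ → V → ℝ
  | 0, _ => 1
  | j + 1, x => ∑ y, A x y * walkWeight A j y

variable {A : V → V → ℝ}

theorem walkWeight_succ (j : ℕ) (x : V) :
    walkWeight A (j + 1) x = ∑ y, A x y * walkWeight A j y := rfl

theorem walkWeight_nonneg (hA : ∀ x y, 0 ≤ A x y) (j : ℕ) (x : V) : 0 ≤ walkWeight A j x := by
  induction j generalizing x with
  | zero => exact zero_le_one
  | succ j ih => exact sum_nonneg fun y _ => mul_nonneg (hA x y) (ih y)

theorem walkWeight_succ_pos (hA : ∀ x y, 0 ≤ A x y) {j : ℕ} {x y : V} (hxy : 0 < A x y)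
    (hy : 0 < walkWeight A j y) : 0 < walkWeight A (j + 1) x :=
  sum_pos' (fun z _ => mul_nonneg (hA x z) (walkWeight_nonneg hA j z))
    ⟨y, mem_univ y, mul_pos hxy hy⟩

theorem walkWeight_pos (hA : ∀ x y, 0 ≤ A x y) (hs : ∀ x y, A x y = A y x) {x y : V}
    (hxy : 0 < A x y) (j : ℕ) : 0 < walkWeight A j x := by
  suffices 0 < walkWeight A j x ∧ 0 < walkWeight A j y from this.1
  induction j with
  | zero => exact ⟨zero_lt_one, zero_lt_one⟩
  | succ j ih =>
    exact ⟨walkWeight_succ_pos hA hxy ih.2, walkWeight_succ_pos hA (hs x y ▸ hxy) ih.1⟩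

theorem sum_walkWeight_mul_walkWeight (hs : ∀ x y, A x y = A y x) (i j : ℕ) :
    ∑ x, walkWeight A i x * walkWeight A j x = ∑ x, walkWeight A (i + j) x := by
  induction i generalizing j with
  | zero => simp [walkWeight]
  | succ i ih =>
    rw [show i + 1 + j = i + (j + 1) by ring, ← ih]
    simp only [walkWeight_succ, sum_mul, mul_sum]
    rw [sum_comm]
    refine sum_congr rfl fun x _ => sum_congr rfl fun y _ => ?_
    rw [hs y x]
    ring

/-- An edge-weighted walk sum whose middle edge joins walks of lengths `i` and `j`. -/
theorem sum_walkWeight_edge (hs : ∀ x y, A x y = A y x) (i j : ℕ) :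
    ∑ z : V × V, walkWeight A i z.1 * A z.1 z.2 * walkWeight A j z.2 =
      ∑ x, walkWeight A (i + j + 1) x := by
  rw [add_assoc, ← sum_walkWeight_mul_walkWeight hs, Fintype.sum_prod_type]
  simp only [walkWeight_succ, mul_sum, mul_assoc]

/-- The sum of `p q (log p - log q)` over vertices, where `p` and `q` weigh the walks of
lengths `i` and `j` from the vertex. -/
noncomputable def walkLogSum (A : V → V → ℝ) (i j : ℕ) : ℝ :=
  ∑ x, walkWeight A i x * walkWeight A j x *
    (Real.log (walkWeight A i x) - Real.log (walkWeight A j x))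

theorem walkLogSum_swap (i j : ℕ) : walkLogSum A i j = -walkLogSum A j i := by
  unfold walkLogSum
  rw [← sum_neg_distrib]
  exact sum_congr rfl fun x _ => by ring

theorem walkLogSum_succ_sub_le (hA : ∀ x y, 0 ≤ A x y) (hs : ∀ x y, A x y = A y x)
    (hW : ∀ j, 0 < ∑ x, walkWeight A j x) (i j : ℕ) :
    walkLogSum A (i + 1) j - walkLogSum A i (j + 1) ≤
      (∑ x, walkWeight A (i + j + 1) x) *
        (Real.log (∑ x, walkWeight A (i + j + 3) x) -
          Real.log (∑ x, walkWeight A (i + j + 1) x)) := by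
  have hf := walkWeight_nonneg hA
  have hpos : ∀ z : V × V, 0 < walkWeight A i z.1 * A z.1 z.2 * walkWeight A j z.2 →
      0 < walkWeight A i z.1 ∧ 0 < A z.1 z.2 ∧ 0 < walkWeight A j z.2 := by
    intro z hz
    have h1 : walkWeight A i z.1 ≠ 0 := fun h => by simp [h] at hz
    have h2 : A z.1 z.2 ≠ 0 := fun h => by simp [h] at hz
    have h3 : walkWeight A j z.2 ≠ 0 := fun h => by simp [h] at hz
    exact ⟨(hf i _).lt_of_ne' h1, (hA _ _).lt_of_ne' h2, (hf j _).lt_of_ne' h3⟩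
  have hsum := sum_walkWeight_edge hs i j
  have hsum' := sum_walkWeight_edge hs (j + 1) (i + 1)
  rw [show j + 1 + (i + 1) + 1 = i + j + 3 by ring] at hsum'
  have hmain := sum_mul_log_sub_log_le univ
    (fun z : V × V => walkWeight A i z.1 * A z.1 z.2 * walkWeight A j z.2)
    (fun z : V × V => walkWeight A (j + 1) z.1 * A z.1 z.2 * walkWeight A (i + 1) z.2)
    (fun z _ => mul_nonneg (mul_nonneg (hf _ _) (hA _ _)) (hf _ _))
    (fun z _ => mul_nonneg (mul_nonneg (hf _ _) (hA _ _)) (hf _ _))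
    (fun z _ hz => by
      obtain ⟨h1, h2, h3⟩ := hpos z hz
      exact mul_pos (mul_pos (walkWeight_succ_pos hA h2 h3) h2)
        (walkWeight_succ_pos hA (hs z.1 z.2 ▸ h2) h1))
    (hsum ▸ hW _) (hsum' ▸ hW _)
  rw [hsum, hsum'] at hmain
  refine le_of_eq_of_le ?_ hmain
  have hterm : ∀ z : V × V, walkWeight A i z.1 * A z.1 z.2 * walkWeight A j z.2 *
      (Real.log (walkWeight A (j + 1) z.1 * A z.1 z.2 * walkWeight A (i + 1) z.2) -
        Real.log (walkWeight A i z.1 * A z.1 z.2 * walkWeight A j z.2)) =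
      walkWeight A i z.1 * (A z.1 z.2 * walkWeight A j z.2) *
        (Real.log (walkWeight A (j + 1) z.1) - Real.log (walkWeight A i z.1)) +
      A z.2 z.1 * walkWeight A i z.1 * walkWeight A j z.2 *
        (Real.log (walkWeight A (i + 1) z.2) - Real.log (walkWeight A j z.2)) := by
    intro z
    rw [hs z.2 z.1]
    rcases (mul_nonneg (mul_nonneg (hf i z.1) (hA z.1 z.2)) (hf j z.2)).eq_or_lt with h0 | hz
    · rw [← mul_assoc (walkWeight A i z.1), mul_comm (A z.1 z.2) (walkWeight A i z.1), ← h0]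
      simp
    · obtain ⟨h1, h2, h3⟩ := hpos z hz
      have h4 := walkWeight_succ_pos hA h2 h3
      have h5 := walkWeight_succ_pos hA (hs z.1 z.2 ▸ h2) h1
      rw [Real.log_mul (by positivity) h5.ne', Real.log_mul h4.ne' h2.ne',
        Real.log_mul (by positivity) h3.ne', Real.log_mul h1.ne' h2.ne']
      ring
  rw [sum_congr rfl fun z _ => hterm z, sum_add_distrib, Fintype.sum_prod_type,
    Fintype.sum_prod_type_right]
  simp only [← sum_mul, ← mul_sum, ← walkWeight_succ]
  rw [walkLogSum_swap i, sub_neg_eq_add, add_comm]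
  unfold walkLogSum
  congr 1
  exact sum_congr rfl fun x _ => by ring

theorem two_mul_log_walkWeight_le (hA : ∀ x y, 0 ≤ A x y) (hs : ∀ x y, A x y = A y x)
    (hW : ∀ j, 0 < ∑ x, walkWeight A j x) (k : ℕ) :
    2 * (Real.log (∑ x, walkWeight A k x) - Real.log (Fintype.card V)) ≤
      k * (Real.log (∑ x, walkWeight A (k + 2) x) - Real.log (∑ x, walkWeight A k x)) := by
  have hstep : ∀ i ∈ range k,
      walkLogSum A (i + 1) (k - (i + 1)) - walkLogSum A i (k - i) ≤
        (∑ x, walkWeight A k x) *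
        (Real.log (∑ x, walkWeight A (k + 2) x) - Real.log (∑ x, walkWeight A k x)) := by
    intro i hi
    obtain ⟨j, rfl⟩ := Nat.exists_eq_add_of_lt (mem_range.mp hi)
    have h := walkLogSum_succ_sub_le hA hs hW i j
    rwa [show i + j + 1 - (i + 1) = j by omega, show i + j + 1 - i = j + 1 by omega]
  have htel := sum_le_sum hstep
  rw [sum_range_sub (fun i => walkLogSum A i (k - i)), sum_const, card_range, nsmul_eq_mul,
    Nat.sub_self, Nat.sub_zero, walkLogSum_swap 0] at htel
  have hcard : ∑ _x : V, (1 : ℝ) = Fintype.card V := by simp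
  have hent := sum_mul_log_sub_log_le univ (walkWeight A k) (fun _ => 1)
    (fun x _ => walkWeight_nonneg hA k x) (fun _ _ => zero_le_one) (fun _ _ _ => zero_lt_one)
    (hW k) (hW 0)
  rw [hcard] at hent
  have hlog : walkLogSum A k 0 =
      -∑ x, walkWeight A k x * (Real.log 1 - Real.log (walkWeight A k x)) := by
    simp [walkLogSum, walkWeight]
  refine le_of_mul_le_mul_left ?_ (hW k)
  linarith

/-- The walk weights sum the products of edge weights over all vertex sequences. -/
theorem sum_prod_eq_sum_walkWeight (g : V → ℝ) (k : ℕ) :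
    ∑ f : Fin (k + 1) → V, g (f 0) * ∏ i : Fin k, A (f i.castSucc) (f i.succ) =
      ∑ x, g x * walkWeight A k x := by
  induction k generalizing g with
  | zero =>
    rw [← (Equiv.funUnique (Fin 1) V).symm.sum_comp]
    simp [walkWeight]
  | succ k ih =>
    rw [← (Fin.consEquiv fun _ => V).sum_comp, Fintype.sum_prod_type_right]
    have h := ih fun y => ∑ x, g x * A x y
    simp only [Fin.consEquiv_apply, Fin.prod_univ_succ, Fin.cons_zero, Fin.cons_succ,
      Fin.castSucc_zero, ← Fin.succ_castSucc, ← mul_assoc, ← sum_mul]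
    rw [h]
    simp only [walkWeight_succ, sum_mul, mul_sum, mul_assoc]
    exact sum_comm

end WeightedWalks

open Classical in
theorem walkCount_eq_sum_walkWeight (n k : ℕ) (G : SimpleGraph (Fin n)) :
    (walkCount n k G : ℝ) = ∑ x, walkWeight (fun a b => if G.Adj a b then 1 else 0) k x := by
  have h := sum_prod_eq_sum_walkWeight (A := fun a b => if G.Adj a b then 1 else 0)
    (fun _ : Fin n => 1) k
  simp only [one_mul] at h
  rw [← h, walkCount, Nat.card_eq_fintype_card, Fintype.card_subtype]
  simp [Finset.prod_ite_zero]

theorem w_pos {n : ℕ} {G : SimpleGraph (Fin n)} (hG : ∃ a b, G.Adj a b) (j : ℕ) :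
    0 < w n j G := by
  classical
  obtain ⟨a, b, hab⟩ := hG
  have hn : (0 : ℝ) < n := by exact_mod_cast a.pos
  refine div_pos ?_ hn
  rw [walkCount_eq_sum_walkWeight]
  exact sum_pos' (fun x _ => walkWeight_nonneg (fun x y => by split_ifs <;> norm_num) j x)
    ⟨a, mem_univ a, walkWeight_pos (y := b) (fun x y => by split_ifs <;> norm_num)
      (fun x y => by simp [G.adj_comm]) (by simp [hab]) j⟩

theorem log_w_div_le {n : ℕ} {G : SimpleGraph (Fin n)} (hG : ∃ a b, G.Adj a b) {k : ℕ}
    (hk : 0 < k) :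
    Real.log (w n k G) / k ≤ Real.log (w n (k + 2) G) / (k + 2 : ℕ) := by
  classical
  have hn : (0 : ℝ) < n := by exact_mod_cast hG.choose.pos
  have hpos : ∀ j, 0 < (walkCount n j G : ℝ) := fun j => by
    have := mul_pos (w_pos hG j) hn
    rwa [w, div_mul_cancel₀ _ hn.ne'] at this
  have h := two_mul_log_walkWeight_le (A := fun a b => if G.Adj a b then 1 else 0)
    (fun x y => by split_ifs <;> norm_num) (fun x y => by simp [G.adj_comm])
    (fun j => walkCount_eq_sum_walkWeight n j G ▸ hpos j) k
  rw [← walkCount_eq_sum_walkWeight, ← walkCount_eq_sum_walkWeight, Fintype.card_fin] at h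
  have hk' : (0 : ℝ) < k := by exact_mod_cast hk
  rw [div_le_div_iff₀ hk' (by positivity), w, w, Real.log_div (hpos _).ne' hn.ne',
    Real.log_div (hpos _).ne' hn.ne']
  push_cast
  linarith

/-- For a graph with at least one edge and odd `k ≥ t ≥ 1`,
`w_k(G)^{1/k} ≥ w_t(G)^{1/t}`: the normalized walk counts `w_j(G)^{1/j}` are
non-decreasing along odd `j`. -/
theorem walk_root_mono (n k t : ℕ) (G : SimpleGraph (Fin n))
    (hG : ∃ a b, G.Adj a b)
    (hk : Odd k) (ht : Odd t) (ht1 : 1 ≤ t) (htk : t ≤ k) :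
    w n k G ^ ((1 : ℝ) / k) ≥ w n t G ^ ((1 : ℝ) / t) := by
  obtain ⟨m, rfl⟩ : ∃ m, k = t + 2 * m := by
    obtain ⟨a, rfl⟩ := hk
    obtain ⟨b, rfl⟩ := ht
    exact ⟨a - b, by omega⟩
  have hle : Real.log (w n t G) / t ≤ Real.log (w n (t + 2 * m) G) / (t + 2 * m : ℕ) := by
    clear hk htk
    induction m with
    | zero => rw [mul_zero, add_zero]
    | succ m ih =>
      rw [mul_add, mul_one, ← add_assoc]
      exact ih.trans (log_w_div_le hG (by omega))
  rw [ge_iff_le, Real.rpow_def_of_pos (w_pos hG t), Real.rpow_def_of_pos (w_pos hG _),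
    Real.exp_le_exp, mul_one_div, mul_one_div]
  exact hle
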